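/- Let δ > 0, γ > 0, p ≥ 2, and let 𝓜_γ = {M ∈ 𝓜 : ‖Ψ_M‖_F² ≤ γ² n}. Let θ̂ be any measurable random element of the simplex {θ : θ_M ≥ 0 for all M ∈ 𝓜_γ, Σ_{M∈𝓜_γ} θ_M = 1}, and set Δ₀₂ = (2σ²/ν_r²) Σ_{M∈𝓜_γ} θ̂_M [ ‖Ψ_Mᵀ ε‖² − 2(δ+1)(ln p) ‖Ψ_M‖_F² ]. Then E(Δ₀₂) ≤ 4 σ² γ² ν_r^{-2} n p^{−δ}. -/

import Mathlib

open MeasureTheory ProbabilityTheory Matrix Finset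

noncomputable section

/-- Squared Euclidean norm of a vector in `ℝ^k`. -/
def sqnorm {k : ℕ} (v : Fin k → ℝ) : ℝ := ∑ i, v i ^ 2

/-- Euclidean inner product on `ℝ^k`. -/
def ip {k : ℕ} (u v : Fin k → ℝ) : ℝ := ∑ i, u i * v i

/-- The `j`-th column of a matrix. -/
def colv {a b : ℕ} (B : Matrix (Fin a) (Fin b) ℝ) (j : Fin b) : Fin a → ℝ := fun i => B i j

/-- The matrix `B_M`: the columns of `B` outside `M` are replaced by zero. -/
def restr {a b : ℕ} (B : Matrix (Fin a) (Fin b) ℝ) (M : Finset (Fin b)) :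
    Matrix (Fin a) (Fin b) ℝ := fun i j => if j ∈ M then B i j else 0

/-- Squared Frobenius norm of a matrix. -/
def frob2 {a b : ℕ} (B : Matrix (Fin a) (Fin b) ℝ) : ℝ := ∑ j, sqnorm (colv B j)

/-- `x` has at most `r` nonzero coordinates. -/
def sparse {k : ℕ} (r : ℕ) (x : Fin k → ℝ) : Prop := (Function.support x).ncard ≤ r

/-- `H` is the orthogonal projection matrix of `ℝ^m` onto `span{φ_j : j ∈ M}`:
symmetric, idempotent, with range equal to the span of the columns of `Φ` indexed by `M`. -/
def IsProjOnto {m p : ℕ} (Φ : Matrix (Fin m) (Fin p) ℝ) (M : Finset (Fin p))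
    (H : Matrix (Fin m) (Fin m) ℝ) : Prop :=
  H.IsSymm ∧ H * H = H ∧
    LinearMap.range H.mulVecLin = Submodule.span ℝ (colv Φ '' (M : Set (Fin p)))

/-- `Ψ = A (AᵀA)⁻¹ Φ`. -/
def Psi {n m p : ℕ} (A : Matrix (Fin n) (Fin m) ℝ) (Φ : Matrix (Fin m) (Fin p) ℝ) :
    Matrix (Fin n) (Fin p) ℝ := A * (Aᵀ * A)⁻¹ * Φ

/-- `z = (AᵀA)⁻¹ Aᵀ y` where `y = A f + σ e`. -/
def zv {n m : ℕ} (A : Matrix (Fin n) (Fin m) ℝ) (f : Fin m → ℝ) (σ : ℝ) (e : Fin n → ℝ) :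
    Fin m → ℝ := ((Aᵀ * A)⁻¹ * Aᵀ).mulVec (A.mulVec f + σ • e)

/-- `ξ = (AᵀA)⁻¹ Aᵀ e`. -/
def xiv {n m : ℕ} (A : Matrix (Fin n) (Fin m) ℝ) (e : Fin n → ℝ) : Fin m → ℝ :=
  ((Aᵀ * A)⁻¹ * Aᵀ).mulVec e

/-- The collection `𝓜` of models of size at most `r/2`. -/
def models (p r : ℕ) : Finset (Finset (Fin p)) := Finset.univ.filter fun M => 2 * M.card ≤ r

open scoped Classical in
/-- The restricted collection `𝓜_γ = {M ∈ 𝓜 : ‖Ψ_M‖_F² ≤ γ²n}`. -/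
def modelsG {n m p : ℕ} (r : ℕ) (A : Matrix (Fin n) (Fin m) ℝ) (Φ : Matrix (Fin m) (Fin p) ℝ)
    (γ : ℝ) : Finset (Finset (Fin p)) :=
  Finset.univ.filter fun M => 2 * M.card ≤ r ∧ frob2 (restr (Psi A Φ) M) ≤ γ ^ 2 * (n : ℝ)

/-- The aggregated estimator `f̂_θ = ∑_{M ∈ C} θ_M f̂_M`, where `f̂_M = H_M z`. -/
def aggEst {m p : ℕ} (C : Finset (Finset (Fin p)))
    (H : Finset (Fin p) → Matrix (Fin m) (Fin m) ℝ) (zvec : Fin m → ℝ)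
    (θ : Finset (Fin p) → ℝ) : Fin m → ℝ :=
  ∑ M ∈ C, θ M • (H M).mulVec zvec

/-- The penalty `U_M = 4σ²(δ+1)ν_r⁻² ‖Ψ_M‖_F² ln p`. -/
def Ufun {n m p : ℕ} (A : Matrix (Fin n) (Fin m) ℝ) (Φ : Matrix (Fin m) (Fin p) ℝ)
    (σ δ ν2 : ℝ) (M : Finset (Fin p)) : ℝ :=
  4 * σ ^ 2 * (δ + 1) / ν2 * frob2 (restr (Psi A Φ) M) * Real.log p

/-- The Q-aggregation criterion (with `α = 1/2`, multiplied by 2):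
`∑_M θ_M (‖z - f̂_M‖² + 2U_M) + ‖z - f̂_θ‖²`. -/
def aggCrit {m p : ℕ} (C : Finset (Finset (Fin p)))
    (H : Finset (Fin p) → Matrix (Fin m) (Fin m) ℝ) (zvec : Fin m → ℝ)
    (U : Finset (Fin p) → ℝ) (θ : Finset (Fin p) → ℝ) : ℝ :=
  ∑ M ∈ C, θ M * (sqnorm (zvec - (H M).mulVec zvec) + 2 * U M) +
    sqnorm (zvec - aggEst C H zvec θ)

/-!
Write `ψ_j` for the columns of `Ψ`. By linearity `‖Ψ_Mᵀ ε‖² - T ‖Ψ_M‖_F²` is the sum over `j ∈ M`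
of `⟨ψ_j, ε⟩² - T ‖ψ_j‖²`, where `⟨ψ_j, ε⟩` is centred Gaussian with variance `‖ψ_j‖²`. Any `j` in
a model of `𝓜_γ` has `‖ψ_j‖² ≤ γ² n`, so replacing each summand by its positive part and summing
over all such `j` dominates every model at once, hence also every random convex combination of
models. The sharp two-sided tail `P(X² > s) ≤ exp (-s / (2 v))` for `X ∼ N(0, v)` integrates to
`E (X² - T v)₊ ≤ 2 v exp (-T / 2)`. With `T = 2 (δ + 1) log p` the sum over at most `p` columns is
at most `p · 2 γ² n · p^{-(δ + 1)}`.
-/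

section GaussianTail

open scoped NNReal

variable {v : ℝ≥0}

lemma gaussianPDFReal_add_le_exp_mul {t x : ℝ} (ht : 0 ≤ t) (hx : 0 ≤ x) :
    gaussianPDFReal 0 v (x + t) ≤ Real.exp (-t ^ 2 / (2 * v)) * gaussianPDFReal 0 v x := by
  have h_exponent : -(x + t) ^ 2 / (2 * v) ≤ -t ^ 2 / (2 * v) + -x ^ 2 / (2 * v) := by
    rw [← add_div]
    gcongr
    linarith [mul_nonneg hx ht]
  simp only [gaussianPDFReal, sub_zero]
  rw [mul_left_comm, ← Real.exp_add]
  gcongr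

lemma gaussianReal_real_Ioi_le_exp_mul (hv : v ≠ 0) {t : ℝ} (ht : 0 ≤ t) :
    (gaussianReal 0 v).real (Set.Ioi t) ≤
      Real.exp (-t ^ 2 / (2 * v)) * (gaussianReal 0 v).real (Set.Ioi 0) := by
  have h_real (s : Set ℝ) : (gaussianReal 0 v).real s = ∫ x in s, gaussianPDFReal 0 v x := by
    rw [measureReal_def, gaussianReal_apply_eq_integral 0 hv,
      ENNReal.toReal_ofReal (integral_nonneg (gaussianPDFReal_nonneg 0 v))]
  have h_int := integrable_gaussianPDFReal 0 v
  calc (gaussianReal 0 v).real (Set.Ioi t)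
      = ∫ x in Set.Ioi 0, gaussianPDFReal 0 v (x + t) := by
        rw [h_real, ← (measurePreserving_add_right volume t).setIntegral_preimage_emb
          (measurableEmbedding_addRight t), Set.preimage_add_const_Ioi, sub_self]
    _ ≤ ∫ x in Set.Ioi 0, Real.exp (-t ^ 2 / (2 * v)) * gaussianPDFReal 0 v x :=
        setIntegral_mono_on (h_int.comp_add_right t).integrableOn (h_int.const_mul _).integrableOn
          measurableSet_Ioi fun x hx ↦ gaussianPDFReal_add_le_exp_mul ht (le_of_lt hx)
    _ = Real.exp (-t ^ 2 / (2 * v)) * (gaussianReal 0 v).real (Set.Ioi 0) := by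
        rw [integral_const_mul, h_real]

lemma gaussianReal_real_lt_abs {t : ℝ} (ht : 0 ≤ t) :
    (gaussianReal 0 v).real {x | t < |x|} = 2 * (gaussianReal 0 v).real (Set.Ioi t) := by
  have h_union : {x : ℝ | t < |x|} = Set.Ioi t ∪ Set.Iio (-t) := by
    ext x
    simp [lt_abs, lt_neg]
  have h_disjoint : Disjoint (Set.Ioi t) (Set.Iio (-t)) :=
    Set.disjoint_left.2 fun x (hx : t < x) (hx' : x < -t) ↦ by linarith
  have h_symm : (gaussianReal 0 v).real (Set.Iio (-t)) = (gaussianReal 0 v).real (Set.Ioi t) := by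
    nth_rw 1 [← neg_zero, ← gaussianReal_map_neg]
    rw [map_measureReal_apply measurable_neg measurableSet_Iio]
    simp
  rw [h_union, measureReal_union h_disjoint measurableSet_Iio, h_symm, two_mul]

/-- The constant `1` in front of the exponential, half of what the Chernoff bound gives, comes from
comparing with the event `0 < |x|` instead of bounding each one-sided tail separately. -/
lemma gaussianReal_real_lt_sq_le_exp (hv : v ≠ 0) (s : ℝ) :
    (gaussianReal 0 v).real {x | s < x ^ 2} ≤ Real.exp (-s / (2 * v)) := by
  rcases lt_or_ge s 0 with hs | hs
  · exact measureReal_le_one.trans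
      (Real.one_le_exp (div_nonneg (neg_nonneg.2 hs.le) (by positivity)))
  · have h_abs : {x : ℝ | s < x ^ 2} = {x | √s < |x|} := by
      ext x
      simp only [Set.mem_ofPred_eq, ← Real.sqrt_sq_eq_abs, Real.sqrt_lt_sqrt_iff hs]
    calc (gaussianReal 0 v).real {x | s < x ^ 2}
        = 2 * (gaussianReal 0 v).real (Set.Ioi √s) := by
          rw [h_abs, gaussianReal_real_lt_abs s.sqrt_nonneg]
      _ ≤ 2 * (Real.exp (-√s ^ 2 / (2 * v)) * (gaussianReal 0 v).real (Set.Ioi 0)) := by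
          gcongr
          exact gaussianReal_real_Ioi_le_exp_mul hv s.sqrt_nonneg
      _ = Real.exp (-s / (2 * v)) * (gaussianReal 0 v).real {x | 0 < |x|} := by
          rw [Real.sq_sqrt hs, gaussianReal_real_lt_abs le_rfl, mul_left_comm]
      _ ≤ Real.exp (-s / (2 * v)) := mul_le_of_le_one_right (Real.exp_nonneg _) measureReal_le_one

lemma integrable_sq_gaussianReal (m : ℝ) : Integrable (fun x ↦ x ^ 2) (gaussianReal m v) :=
  IsGaussian.memLp_two_id.integrable_sq

lemma integrable_max_sq_sub_gaussianReal (m s : ℝ) :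
    Integrable (fun x ↦ max (x ^ 2 - s) 0) (gaussianReal m v) :=
  ((integrable_sq_gaussianReal m).sub (integrable_const s)).pos_part

lemma integral_max_sq_sub_gaussianReal_le_of_ne_zero (hv : v ≠ 0) (s : ℝ) :
    ∫ x, max (x ^ 2 - s) 0 ∂gaussianReal 0 v ≤ 2 * v * Real.exp (-s / (2 * v)) := by
  have hv_pos : 0 < (v : ℝ) := NNReal.coe_pos.2 (pos_iff_ne_zero.2 hv)
  have h_rate : -(2 * v : ℝ)⁻¹ < 0 := by simpa using hv_pos
  have h_tail (u : ℝ) (hu : 0 < u) : (gaussianReal 0 v).real {x | u < max (x ^ 2 - s) 0} ≤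
      Real.exp (-s / (2 * v)) * Real.exp (-(2 * v : ℝ)⁻¹ * u) := by
    have h_event : {x : ℝ | u < max (x ^ 2 - s) 0} = {x | s + u < x ^ 2} := by
      ext x
      simp [hu.not_gt, lt_sub_iff_add_lt']
    rw [h_event, ← Real.exp_add]
    refine (gaussianReal_real_lt_sq_le_exp hv (s + u)).trans_eq ?_
    congr 1
    ring
  rw [(integrable_max_sq_sub_gaussianReal 0 s).integral_eq_integral_meas_lt
    (ae_of_all _ fun _ ↦ le_max_right _ _)]
  calc ∫ u in Set.Ioi 0, (gaussianReal 0 v).real {x | u < max (x ^ 2 - s) 0}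
      ≤ ∫ u in Set.Ioi 0, Real.exp (-s / (2 * v)) * Real.exp (-(2 * v : ℝ)⁻¹ * u) :=
        integral_mono_of_nonneg (ae_of_all _ fun _ ↦ measureReal_nonneg)
          ((integrableOn_exp_mul_Ioi h_rate 0).const_mul _)
          ((ae_restrict_mem measurableSet_Ioi).mono h_tail)
    _ = 2 * v * Real.exp (-s / (2 * v)) := by
        rw [integral_const_mul, integral_exp_mul_Ioi h_rate]
        simp [field]

lemma integral_max_sq_sub_gaussianReal_le (v : ℝ≥0) (T : ℝ) :
    ∫ x, max (x ^ 2 - T * v) 0 ∂gaussianReal 0 v ≤ 2 * v * Real.exp (-T / 2) := by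
  rcases eq_or_ne v 0 with rfl | hv
  · simp
  · refine (integral_max_sq_sub_gaussianReal_le_of_ne_zero hv (T * v)).trans_eq ?_
    rw [← neg_mul, mul_div_mul_right _ _ (NNReal.coe_ne_zero.2 hv)]

end GaussianTail

lemma hasLaw_dotProduct_pi_gaussianReal {ι : Type*} [Fintype ι] (a : ι → ℝ) :
    HasLaw (a ⬝ᵥ ·) (gaussianReal 0 (a ⬝ᵥ a).toNNReal)
      (Measure.pi fun _ : ι ↦ gaussianReal 0 1) := by
  let L : StrongDual ℝ (EuclideanSpace ℝ ι) := innerSL ℝ (WithLp.toLp 2 a)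
  have h_norm : ‖L‖ ^ 2 = a ⬝ᵥ a := by
    rw [innerSL_apply_norm, EuclideanSpace.real_norm_sq_eq]
    simp [dotProduct, sq]
  have hL : HasLaw L (gaussianReal 0 (a ⬝ᵥ a).toNNReal) (stdGaussian (EuclideanSpace ℝ ι)) :=
    ⟨by fun_prop, by
      rw [IsGaussian.map_eq_gaussianReal, integral_strongDual_stdGaussian,
        variance_dual_stdGaussian, h_norm]⟩
  have h_comp := hL.comp ⟨by fun_prop, map_pi_eq_stdGaussian⟩
  convert h_comp using 1
  ext x
  simp [L, PiLp.inner_apply, dotProduct, mul_comm]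

lemma sum_mul_le_of_sum_le_one {ι : Type*} {s : Finset ι} {w x : ι → ℝ} {b : ℝ}
    (hw : ∀ i ∈ s, 0 ≤ w i) (hw_sum : ∑ i ∈ s, w i ≤ 1) (hb : 0 ≤ b) (hx : ∀ i ∈ s, x i ≤ b) :
    ∑ i ∈ s, w i * x i ≤ b :=
  calc ∑ i ∈ s, w i * x i ≤ ∑ i ∈ s, w i * b :=
        sum_le_sum fun i hi ↦ mul_le_mul_of_nonneg_left (hx i hi) (hw i hi)
    _ = (∑ i ∈ s, w i) * b := (sum_mul ..).symm
    _ ≤ b := mul_le_of_le_one_left hb hw_sum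

section Columns

variable {n p : ℕ} (B : Matrix (Fin n) (Fin p) ℝ)

lemma sqnorm_eq_dotProduct_self (a : Fin n → ℝ) : sqnorm a = a ⬝ᵥ a := by
  simp only [sqnorm, dotProduct, sq]

lemma sqnorm_nonneg (a : Fin n → ℝ) : 0 ≤ sqnorm a :=
  sum_nonneg fun _ _ ↦ sq_nonneg _

lemma frob2_restr (M : Finset (Fin p)) :
    frob2 (restr B M) = ∑ j ∈ M, sqnorm (colv B j) := by
  simp only [frob2, ← sum_subset M.subset_univ fun j _ hj ↦
    show sqnorm (colv (restr B M) j) = 0 by simp [sqnorm, colv, restr, hj]]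
  exact sum_congr rfl fun j hj ↦ by simp [sqnorm, colv, restr, hj]

lemma sqnorm_transpose_restr_mulVec (M : Finset (Fin p)) (e : Fin n → ℝ) :
    sqnorm ((restr B M)ᵀ.mulVec e) = ∑ j ∈ M, (colv B j ⬝ᵥ e) ^ 2 := by
  have h_coord (j : Fin p) :
      (restr B M)ᵀ.mulVec e j = if j ∈ M then colv B j ⬝ᵥ e else 0 := by
    split_ifs with hj <;> simp [mulVec, dotProduct, restr, colv, hj]
  simp [sqnorm, h_coord, ite_pow]

/-- The truncated excess `(⟨a, e⟩² - T ‖a‖²)₊`; for standard Gaussian `e` the threshold is `T` times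
the variance of `⟨a, e⟩`. -/
def projExcess (T : ℝ) (a e : Fin n → ℝ) : ℝ := max ((a ⬝ᵥ e) ^ 2 - T * sqnorm a) 0

lemma projExcess_nonneg (T : ℝ) (a e : Fin n → ℝ) : 0 ≤ projExcess T a e :=
  le_max_right _ _

lemma sqnorm_transpose_restr_mulVec_sub_le (M : Finset (Fin p)) (T : ℝ) (e : Fin n → ℝ) :
    sqnorm ((restr B M)ᵀ.mulVec e) - T * frob2 (restr B M) ≤
      ∑ j ∈ M, projExcess T (colv B j) e := by
  rw [sqnorm_transpose_restr_mulVec, frob2_restr, mul_sum, ← sum_sub_distrib]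
  exact sum_le_sum fun j _ ↦ le_max_left _ _

/-- The indices of the columns of `B` with squared norm at most `K`. -/
def shortColumns (K : ℝ) : Finset (Fin p) := {j | sqnorm (colv B j) ≤ K}

lemma subset_shortColumns {M : Finset (Fin p)} {K : ℝ} (hM : frob2 (restr B M) ≤ K) :
    M ⊆ shortColumns B K := fun j hj ↦ by
  rw [frob2_restr] at hM
  simpa [shortColumns] using
    (single_le_sum (f := fun k ↦ sqnorm (colv B k)) (fun k _ ↦ sqnorm_nonneg _) hj).trans hM

end Columns

section RandomWeights

variable {n p : ℕ} {Ω : Type*} [MeasurableSpace Ω] {μ : Measure Ω} {ε : Ω → Fin n → ℝ}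

lemma hasLaw_dotProduct (hε : HasLaw ε (Measure.pi fun _ ↦ gaussianReal 0 1) μ)
    (a : Fin n → ℝ) :
    HasLaw (fun ω ↦ a ⬝ᵥ ε ω) (gaussianReal 0 (sqnorm a).toNNReal) μ := by
  rw [sqnorm_eq_dotProduct_self]
  exact (hasLaw_dotProduct_pi_gaussianReal a).fun_comp hε

lemma integrable_dotProduct_sq (hε : HasLaw ε (Measure.pi fun _ ↦ gaussianReal 0 1) μ)
    (a : Fin n → ℝ) : Integrable (fun ω ↦ (a ⬝ᵥ ε ω) ^ 2) μ :=
  (hasLaw_dotProduct hε a).hasGaussianLaw.memLp_two.integrable_sq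

lemma integrable_projExcess (hε : HasLaw ε (Measure.pi fun _ ↦ gaussianReal 0 1) μ)
    (T : ℝ) (a : Fin n → ℝ) : Integrable (fun ω ↦ projExcess T a (ε ω)) μ :=
  have := hε.isProbabilityMeasure
  ((integrable_dotProduct_sq hε a).sub (integrable_const _)).pos_part

lemma integral_projExcess_le (hε : HasLaw ε (Measure.pi fun _ ↦ gaussianReal 0 1) μ)
    (T : ℝ) (a : Fin n → ℝ) :
    ∫ ω, projExcess T a (ε ω) ∂μ ≤ 2 * sqnorm a * Real.exp (-T / 2) := by
  have h_transfer := (hasLaw_dotProduct hε a).integral_comp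
    (integrable_max_sq_sub_gaussianReal 0 (T * sqnorm a)).aestronglyMeasurable
  have h_bound := integral_max_sq_sub_gaussianReal_le (sqnorm a).toNNReal T
  rw [Real.coe_toNNReal _ (sqnorm_nonneg a), ← h_transfer] at h_bound
  exact h_bound

lemma integral_sum_shortColumns_projExcess_le
    (hε : HasLaw ε (Measure.pi fun _ ↦ gaussianReal 0 1) μ)
    (B : Matrix (Fin n) (Fin p) ℝ) (T : ℝ) {K : ℝ} (hK : 0 ≤ K) :
    ∫ ω, ∑ j ∈ shortColumns B K, projExcess T (colv B j) (ε ω) ∂μ ≤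
      p * (2 * K * Real.exp (-T / 2)) := by
  rw [integral_finsetSum _ fun j _ ↦ integrable_projExcess hε T (colv B j)]
  calc ∑ j ∈ shortColumns B K, ∫ ω, projExcess T (colv B j) (ε ω) ∂μ
      ≤ #(shortColumns B K) • (2 * K * Real.exp (-T / 2)) := by
        refine sum_le_card_nsmul _ _ _ fun j hj ↦ (integral_projExcess_le hε T _).trans ?_
        have hjK : sqnorm (colv B j) ≤ K := by simpa [shortColumns] using hj
        gcongr
    _ ≤ p * (2 * K * Real.exp (-T / 2)) := by
        rw [nsmul_eq_mul]
        gcongr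
        exact card_finset_fin_le _

variable {𝒞 : Finset (Finset (Fin p))} {θ : Ω → Finset (Fin p) → ℝ}

lemma integrable_weighted_sub (hε : HasLaw ε (Measure.pi fun _ ↦ gaussianReal 0 1) μ)
    (hθmeas : ∀ M ∈ 𝒞, AEMeasurable (θ · M) μ) (hθnn : ∀ ω, ∀ M ∈ 𝒞, 0 ≤ θ ω M)
    (hθsum : ∀ ω, ∑ M ∈ 𝒞, θ ω M ≤ 1) (B : Matrix (Fin n) (Fin p) ℝ) (T : ℝ) :
    Integrable (fun ω ↦ ∑ M ∈ 𝒞,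
      θ ω M * (sqnorm ((restr B M)ᵀ.mulVec (ε ω)) - T * frob2 (restr B M))) μ := by
  have := hε.isProbabilityMeasure
  refine integrable_finsetSum _ fun M hM ↦ Integrable.bdd_mul (c := 1) ?_
    (hθmeas M hM).aestronglyMeasurable (ae_of_all _ fun ω ↦ ?_)
  · simp only [sqnorm_transpose_restr_mulVec]
    exact (integrable_finsetSum _ fun j _ ↦ integrable_dotProduct_sq hε _).sub
      (integrable_const _)
  · rw [Real.norm_of_nonneg (hθnn ω M hM)]
    exact (single_le_sum (hθnn ω) hM).trans (hθsum ω)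

lemma integral_weighted_sub_le (hε : HasLaw ε (Measure.pi fun _ ↦ gaussianReal 0 1) μ)
    (hθmeas : ∀ M ∈ 𝒞, AEMeasurable (θ · M) μ) (hθnn : ∀ ω, ∀ M ∈ 𝒞, 0 ≤ θ ω M)
    (hθsum : ∀ ω, ∑ M ∈ 𝒞, θ ω M ≤ 1) {B : Matrix (Fin n) (Fin p) ℝ} {K : ℝ} (hK : 0 ≤ K)
    (hB : ∀ M ∈ 𝒞, frob2 (restr B M) ≤ K) (T : ℝ) :
    ∫ ω, ∑ M ∈ 𝒞,
        θ ω M * (sqnorm ((restr B M)ᵀ.mulVec (ε ω)) - T * frob2 (restr B M)) ∂μ ≤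
      p * (2 * K * Real.exp (-T / 2)) := by
  refine le_trans (integral_mono (integrable_weighted_sub hε hθmeas hθnn hθsum B T)
    (integrable_finsetSum _ fun j _ ↦ integrable_projExcess hε T (colv B j)) fun ω ↦ ?_)
    (integral_sum_shortColumns_projExcess_le hε B T hK)
  refine sum_mul_le_of_sum_le_one (hθnn ω) (hθsum ω)
    (sum_nonneg fun j _ ↦ projExcess_nonneg _ _ _) fun M hM ↦ ?_
  exact (sqnorm_transpose_restr_mulVec_sub_le B M T (ε ω)).trans <|
    sum_le_sum_of_subset_of_nonneg (subset_shortColumns B (hB M hM))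
      fun j _ _ ↦ projExcess_nonneg _ _ _

end RandomWeights

lemma mul_exp_neg_mul_log {x : ℝ} (hx : 0 < x) (δ : ℝ) :
    x * Real.exp (-(2 * (δ + 1) * Real.log x) / 2) = x ^ (-δ) := by
  nth_rw 1 [← Real.exp_log hx]
  rw [← Real.exp_add, Real.rpow_def_of_pos hx]
  congr 1
  ring

theorem expectation_Delta02_bound_general
    {n p : ℕ} (hp : 0 < p) (Ψ : Matrix (Fin n) (Fin p) ℝ) (𝒞 : Finset (Finset (Fin p))) {γ : ℝ}
    (h𝒞 : ∀ M ∈ 𝒞, frob2 (restr Ψ M) ≤ γ ^ 2 * n) (σ δ : ℝ) {ν2 : ℝ} (hν2 : 0 < ν2)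
    {Ω : Type*} [MeasurableSpace Ω] {μ : Measure Ω} {ε : Ω → Fin n → ℝ}
    (hε : HasLaw ε (Measure.pi fun _ ↦ gaussianReal 0 1) μ) {θ : Ω → Finset (Fin p) → ℝ}
    (hθmeas : ∀ M ∈ 𝒞, AEMeasurable (θ · M) μ) (hθnn : ∀ ω, ∀ M ∈ 𝒞, 0 ≤ θ ω M)
    (hθsum : ∀ ω, ∑ M ∈ 𝒞, θ ω M ≤ 1) :
    ∫ ω, 2 * σ ^ 2 / ν2 * ∑ M ∈ 𝒞, θ ω M *
        (sqnorm ((restr Ψ M)ᵀ.mulVec (ε ω)) -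
          2 * (δ + 1) * Real.log p * frob2 (restr Ψ M)) ∂μ ≤
      4 * σ ^ 2 * γ ^ 2 / ν2 * n * (p : ℝ) ^ (-δ) := by
  have h_sum := integral_weighted_sub_le hε hθmeas hθnn hθsum (by positivity) h𝒞
    (2 * (δ + 1) * Real.log p)
  rw [integral_const_mul, ← mul_exp_neg_mul_log (Nat.cast_pos.2 hp)]
  calc _ ≤ 2 * σ ^ 2 / ν2 *
        (p * (2 * (γ ^ 2 * n) * Real.exp (-(2 * (δ + 1) * Real.log p) / 2))) :=
        mul_le_mul_of_nonneg_left h_sum (by positivity)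
    _ = _ := by ring

/-- Bound (eq. (31)) on `E(Δ₀₂)` for random simplex weights over `𝓜_γ`:
`E(Δ₀₂) ≤ 4σ²γ²ν_r⁻² n p^{-δ}`. -/
theorem expectation_Delta02_bound
    {n m p r : ℕ} (hp : 2 ≤ p) (hmn : m ≤ n)
    (A : Matrix (Fin n) (Fin m) ℝ) (hrank : A.rank = m)
    (Φ : Matrix (Fin m) (Fin p) ℝ) (hΦnorm : ∀ j, sqnorm (colv Φ j) = 1)
    (σ : ℝ) (hσ : 0 < σ) (δ : ℝ) (hδ : 0 < δ) (γ : ℝ) (hγ : 0 < γ)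
    (ν2 : ℝ) (hν2 : 0 < ν2)
    (hν2min : ∀ x : Fin p → ℝ, x ≠ 0 → sparse r x → ν2 * sqnorm x ≤ sqnorm (Φ.mulVec x))
    {Ω : Type*} [MeasurableSpace Ω] (μ : Measure Ω) [IsProbabilityMeasure μ]
    (ε : Ω → Fin n → ℝ) (hεmeas : Measurable ε)
    (hεdist : Measure.map ε μ = Measure.pi fun _ : Fin n => gaussianReal 0 1)
    (θhat : Ω → Finset (Fin p) → ℝ)
    (hθmeas : ∀ M : Finset (Fin p), Measurable fun ω => θhat ω M)
    (hθnn : ∀ ω, ∀ M ∈ modelsG r A Φ γ, 0 ≤ θhat ω M)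
    (hθsum : ∀ ω, ∑ M ∈ modelsG r A Φ γ, θhat ω M = 1) :
    ∫ ω,
        (2 * σ ^ 2 / ν2 * ∑ M ∈ modelsG r A Φ γ,
          θhat ω M *
            (sqnorm ((restr (Psi A Φ) M)ᵀ.mulVec (ε ω)) -
              2 * (δ + 1) * Real.log p * frob2 (restr (Psi A Φ) M))) ∂μ ≤
      4 * σ ^ 2 * γ ^ 2 / ν2 * (n : ℝ) * (p : ℝ) ^ (-δ) := by
  exact expectation_Delta02_bound_general (by lia) (Psi A Φ) _
    (fun M hM ↦ (mem_filter.1 hM).2.2) σ δ hν2 ⟨hεmeas.aemeasurable, hεdist⟩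
    (fun M _ ↦ (hθmeas M).aemeasurable) hθnn fun ω ↦ (hθsum ω).le
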